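/- Let n ≥ 2, λ > 0, and let ξ ~ N(ν, λ²I_n) be an n-dimensional Gaussian random vector with mean ν = (‖ν‖, 0, 0, …, 0)ᵀ. Then E[ξ₁²/‖ξ‖²] = 1 − ((n−1)/n)·M(1, n/2 + 1, −‖ν‖²/(2λ²)). -/

import Mathlib

open MeasureTheory ProbabilityTheory Matrix

noncomputable section

def euclNorm {n : ℕ} (x : Fin n → ℝ) : ℝ := Real.sqrt (∑ i, x i ^ 2)

def centerMat (n : ℕ) : Matrix (Fin n) (Fin n) ℝ :=
  1 - (n : ℝ)⁻¹ • Matrix.of (fun _ _ => (1 : ℝ))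

def chi {n : ℕ} (z : Fin n → ℝ) : Fin n → ℝ :=
  (euclNorm ((centerMat n).mulVec z))⁻¹ • (centerMat n).mulVec z

def meanVec {Ω : Type*} [MeasurableSpace Ω] (P : Measure Ω) {n : ℕ}
    (X : Ω → Fin n → ℝ) : Fin n → ℝ := fun i => ∫ ω, X ω i ∂P

def covMatrix {Ω : Type*} [MeasurableSpace Ω] (P : Measure Ω) {n : ℕ}
    (X : Ω → Fin n → ℝ) : Matrix (Fin n) (Fin n) ℝ :=
  Matrix.of fun i j => ∫ ω, (X ω i - meanVec P X i) * (X ω j - meanVec P X j) ∂P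

def MRL {Ω : Type*} [MeasurableSpace Ω] (P : Measure Ω) {n : ℕ}
    (X : Ω → Fin n → ℝ) : ℝ := euclNorm (meanVec P X)

def MD {Ω : Type*} [MeasurableSpace Ω] (P : Measure Ω) {n : ℕ}
    (X : Ω → Fin n → ℝ) : Fin n → ℝ := (euclNorm (meanVec P X))⁻¹ • meanVec P X

def stdGaussianPi (n : ℕ) : Measure (Fin n → ℝ) :=
  Measure.pi fun _ => gaussianReal 0 1

def IsGaussianVec {Ω : Type*} [MeasurableSpace Ω] (P : Measure Ω) {n : ℕ}
    (Z : Ω → Fin n → ℝ) (m : Fin n → ℝ) (S : Matrix (Fin n) (Fin n) ℝ) : Prop :=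
  ∃ A : Matrix (Fin n) (Fin n) ℝ, A * Aᵀ = S ∧
    Measure.map Z P = Measure.map (fun x => m + A.mulVec x) (stdGaussianPi n)

def ascFact (a : ℝ) (k : ℕ) : ℝ := ∏ i ∈ Finset.range k, (a + i)

def kummerM (a b z : ℝ) : ℝ := ∑' k : ℕ, (ascFact a k / ascFact b k) * z ^ k / (Nat.factorial k)

def varrho (m : ℕ) (x : ℝ) : ℝ :=
  (Real.Gamma (((m : ℝ) + 1) / 2) / (Real.sqrt 2 * Real.Gamma (((m : ℝ) + 2) / 2))) * x *
    kummerM (1 / 2) (((m : ℝ) + 2) / 2) (-x ^ 2 / 2)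

def fFun (m : ℕ) (x : ℝ) : ℝ :=
  1 - (((m : ℝ) - 1) / m) * kummerM 1 ((m : ℝ) / 2 + 1) (-x ^ 2 / 2) - (varrho m x) ^ 2

def gFun (m : ℕ) (x : ℝ) : ℝ :=
  (1 / (m : ℝ)) * kummerM 1 ((m : ℝ) / 2 + 1) (-x ^ 2 / 2)

def Vmat (n : ℕ) : Matrix (Fin n) (Fin n) ℝ :=
  Matrix.of fun i j =>
    if (j : ℕ) = n - 1 then 1 / Real.sqrt n
    else if (i : ℕ) = (j : ℕ) then
      ((n : ℝ) - 1 - (j : ℕ)) / Real.sqrt (((n : ℝ) - 1 - (j : ℕ)) * ((n : ℝ) - (j : ℕ)))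
    else if (j : ℕ) < (i : ℕ) then
      -(1 / Real.sqrt (((n : ℝ) - 1 - (j : ℕ)) * ((n : ℝ) - (j : ℕ))))
    else 0

def projMat (n : ℕ) : Matrix (Fin n) (Fin n) ℝ :=
  Matrix.diagonal fun i => if (i : ℕ) < n - 1 then 1 else 0

def embedZero {n : ℕ} (v : Fin (n - 1) → ℝ) : Fin n → ℝ :=
  fun i => if h : (i : ℕ) < n - 1 then v ⟨i, h⟩ else 0

def Ximat (n : ℕ) (r : ℝ) : Matrix (Fin n) (Fin n) ℝ :=
  Matrix.of fun i j => if i = j then 1 else r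

def stdNormCDF (x : ℝ) : ℝ := (gaussianReal 0 1 (Set.Iic x)).toReal

def thetaTilde : Fin 2 → ℝ := ![Real.sqrt 2 / 2, -(Real.sqrt 2 / 2)]

/-!
Since `x_i² / ‖x‖² = ∫₀^∞ x_i² exp(-t ‖x‖²) dt`, the expectation of a squared direction cosine is an
integral over `t` of Gaussian integrals. Weighting `N(ν_j, v)` by `exp(-t x_j²)` gives a multiple of
`N(ν_j / (1 + 2tv), v / (1 + 2tv))`, so for a coordinate with `ν_i = 0` the inner integral is
`v (1 + s)^(-(1 + n/2)) exp(-‖ν‖² / (2v) · s / (1 + s))` with `s = 2tv`. The substitution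
`u = s / (1 + s)` turns its integral over `s` into Euler's integral of `M(1, n/2 + 1, ·)`, that is,
an exponential moment of the beta distribution `B(1, n/2)`. Hence each of the `n - 1` centred
coordinates contributes `M / n`, and the first one contributes the rest, because the squared
direction cosines add up to `1`.
-/

section

open Set
open scoped NNReal

section Kummer

variable {a b : ℝ}

lemma Gamma_mul_ascFact (ha : 0 < a) (k : ℕ) :
    Real.Gamma a * ascFact a k = Real.Gamma (a + k) := by
  induction k with
  | zero => simp [ascFact]
  | succ k ih =>
    have hsucc : ascFact a (k + 1) = ascFact a k * (a + k) := Finset.prod_range_succ _ _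
    rw [hsucc, ← mul_assoc, ih, Nat.cast_succ, ← add_assoc, Real.Gamma_add_one (by positivity),
      mul_comm]

lemma beta_add_natCast_left (ha : 0 < a) (hb : 0 < b) (k : ℕ) :
    beta (a + k) b = ascFact a k / ascFact (a + b) k * beta a b := by
  have hab : a + k + b = a + b + k := by ring
  rw [beta, beta, hab, ← Gamma_mul_ascFact ha, ← Gamma_mul_ascFact (add_pos ha hb)]
  ring

lemma beta_one_left (hb : 0 < b) : beta 1 b = b⁻¹ := by
  have hΓ : Real.Gamma b ≠ 0 := (Real.Gamma_pos_of_pos hb).ne'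
  rw [beta, Real.Gamma_one, add_comm, Real.Gamma_add_one hb.ne', one_mul, div_mul_cancel_right₀ hΓ]

lemma integral_betaMeasure (ha : 0 < a) (hb : 0 < b) (f : ℝ → ℝ) :
    ∫ x, f x ∂betaMeasure a b =
      (beta a b)⁻¹ * ∫ x in Ioo 0 1, x ^ (a - 1) * (1 - x) ^ (b - 1) * f x := by
  have hmeas : Measurable (betaPDF a b) := (measurable_betaPDFReal a b).ennreal_ofReal
  have hdens (x : ℝ) : (betaPDF a b x).toReal • f x =
      (Ioo 0 1).indicator (fun y ↦ (beta a b)⁻¹ * (y ^ (a - 1) * (1 - y) ^ (b - 1) * f y)) x := by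
    by_cases hx : x ∈ Ioo (0 : ℝ) 1
    · rw [betaPDF, ENNReal.toReal_ofReal (betaPDFReal_pos hx.1 hx.2 ha hb).le, betaPDFReal,
        if_pos (mem_Ioo.mp hx), indicator_of_mem hx, smul_eq_mul]
      ring
    · rw [betaPDF, betaPDFReal, if_neg (mt mem_Ioo.mpr hx), indicator_of_notMem hx,
        ENNReal.ofReal_zero, ENNReal.toReal_zero, zero_smul]
  rw [betaMeasure, integral_withDensity_eq_integral_toReal_smul hmeas
    (ae_of_all _ fun _ ↦ ENNReal.ofReal_lt_top)]
  simp_rw [hdens]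
  rw [integral_indicator measurableSet_Ioo, integral_const_mul]

lemma ae_mem_Ioo_betaMeasure (a b : ℝ) : ∀ᵐ x ∂betaMeasure a b, x ∈ Ioo (0 : ℝ) 1 := by
  have hmeas : Measurable (betaPDF a b) := (measurable_betaPDFReal a b).ennreal_ofReal
  rw [betaMeasure, ae_withDensity_iff hmeas]
  refine ae_of_all _ fun x hx ↦ ⟨?_, ?_⟩
  · exact not_le.mp (mt betaPDF_eq_zero_of_nonpos hx)
  · exact not_le.mp (mt betaPDF_eq_zero_of_one_le hx)

lemma integral_Ioo_rpow_mul_one_sub_rpow (ha : 0 < a) (hb : 0 < b) :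
    ∫ x in Ioo (0 : ℝ) 1, x ^ (a - 1) * (1 - x) ^ (b - 1) = beta a b := by
  have := isProbabilityMeasureBeta ha hb
  have h := integral_betaMeasure ha hb fun _ ↦ 1
  simp only [integral_const, probReal_univ, smul_eq_mul, mul_one] at h
  rwa [eq_inv_mul_iff_mul_eq₀ (beta_pos ha hb).ne', mul_one, eq_comm] at h

lemma integral_pow_betaMeasure (ha : 0 < a) (hb : 0 < b) (k : ℕ) :
    ∫ x, x ^ k ∂betaMeasure a b = ascFact a k / ascFact (a + b) k := by
  have hshift : ∀ x ∈ Ioo (0 : ℝ) 1, x ^ (a - 1) * (1 - x) ^ (b - 1) * x ^ k =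
      x ^ (a + k - 1) * (1 - x) ^ (b - 1) := by
    intro x hx
    rw [add_sub_right_comm, Real.rpow_add_natCast hx.1.ne']
    ring
  rw [integral_betaMeasure ha hb, setIntegral_congr_fun measurableSet_Ioo hshift,
    integral_Ioo_rpow_mul_one_sub_rpow (by positivity) hb, beta_add_natCast_left ha hb]
  have := (beta_pos ha hb).ne'
  field_simp

lemma integral_exp_mul_betaMeasure (ha : 0 < a) (hb : 0 < b) (z : ℝ) :
    ∫ x, Real.exp (z * x) ∂betaMeasure a b = kummerM a (a + b) z := by
  have := isProbabilityMeasureBeta ha hb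
  have hseries : HasSum (fun k : ℕ ↦ ∫ x, (z * x) ^ k / k.factorial ∂betaMeasure a b)
      (∫ x, Real.exp (z * x) ∂betaMeasure a b) := by
    refine hasSum_integral_of_dominated_convergence (fun k _ ↦ |z| ^ k / k.factorial)
      (fun k ↦ by fun_prop) (fun k ↦ ?_) (ae_of_all _ fun _ ↦ Real.summable_pow_div_factorial |z|)
      (integrable_const _) (ae_of_all _ fun x ↦ ?_)
    · filter_upwards [ae_mem_Ioo_betaMeasure a b] with x ⟨hx0, hx1⟩
      rw [norm_div, norm_pow, norm_mul, Real.norm_natCast, Real.norm_eq_abs,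
        Real.norm_of_nonneg hx0.le]
      gcongr
      exact mul_le_of_le_one_right (abs_nonneg z) hx1.le
    · rw [Real.exp_eq_exp_ℝ]
      exact NormedSpace.expSeries_div_hasSum_exp (z * x)
  rw [← hseries.tsum_eq, kummerM]
  refine tsum_congr fun k ↦ ?_
  simp_rw [mul_pow]
  rw [integral_div, integral_const_mul, integral_pow_betaMeasure ha hb, mul_comm]

lemma image_div_one_sub_Ioo : (fun u : ℝ ↦ u / (1 - u)) '' Ioo 0 1 = Ioi 0 := by
  ext s
  constructor
  · rintro ⟨u, ⟨hu0, hu1⟩, rfl⟩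
    exact div_pos hu0 (sub_pos.mpr hu1)
  · intro (hs : 0 < s)
    refine ⟨s / (1 + s), ⟨by positivity, (div_lt_one (by positivity)).mpr (by linarith)⟩, ?_⟩
    field_simp
    ring

lemma integral_Ioi_eq_integral_Ioo_div_one_sub (f : ℝ → ℝ) :
    ∫ s in Ioi 0, f s = ∫ u in Ioo 0 1, ((1 - u) ^ 2)⁻¹ * f (u / (1 - u)) := by
  have hderiv : ∀ u ∈ Ioo (0 : ℝ) 1,
      HasDerivWithinAt (fun u : ℝ ↦ u / (1 - u)) ((1 - u) ^ 2)⁻¹ (Ioo 0 1) u := by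
    intro u hu
    have h := (hasDerivAt_id' u).fun_div ((hasDerivAt_id' u).const_sub 1) (sub_pos.mpr hu.2).ne'
    exact (h.congr_deriv (by ring)).hasDerivWithinAt
  have hinj : InjOn (fun u : ℝ ↦ u / (1 - u)) (Ioo 0 1) := by
    intro u hu v hv huv
    rw [div_eq_div_iff (sub_pos.mpr hu.2).ne' (sub_pos.mpr hv.2).ne'] at huv
    linarith
  rw [← image_div_one_sub_Ioo,
    integral_image_eq_integral_abs_deriv_smul measurableSet_Ioo hderiv hinj]
  simp only [abs_inv, abs_pow, sq_abs, smul_eq_mul]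

lemma integral_Ioi_rpow_mul_exp_eq_kummerM (ha : 0 < a) (hb : 0 < b) (z : ℝ) :
    ∫ s in Ioi 0, s ^ (a - 1) * (1 + s) ^ (-(a + b)) * Real.exp (z * (s / (1 + s))) =
      beta a b * kummerM a (a + b) z := by
  rw [integral_Ioi_eq_integral_Ioo_div_one_sub, ← integral_exp_mul_betaMeasure ha hb,
    integral_betaMeasure ha hb, mul_inv_cancel_left₀ (beta_pos ha hb).ne']
  refine setIntegral_congr_fun measurableSet_Ioo fun u hu ↦ ?_
  have hu1 : 0 < 1 - u := sub_pos.mpr hu.2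
  have hs : 1 + u / (1 - u) = (1 - u)⁻¹ := by field_simp; ring
  have hu' : u / (1 - u) / (1 - u)⁻¹ = u := by field_simp
  have hpow : (1 - u) ^ (a + b) = (1 - u) ^ (a - 1) * (1 - u) ^ (b - 1) * (1 - u) ^ 2 := by
    rw [← Real.rpow_add hu1, ← Real.rpow_natCast, ← Real.rpow_add hu1]
    congr 1
    push_cast
    ring
  simp only [hs, hu']
  rw [Real.inv_rpow hu1.le, Real.rpow_neg hu1.le, inv_inv, Real.div_rpow hu.1.le hu1.le, hpow]
  have := (Real.rpow_pos_of_pos hu1 (a - 1)).ne'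
  field_simp

end Kummer

section GaussianTilt

variable {ι : Type*} [Fintype ι]

lemma gaussianPDFReal_mul_exp_neg_mul_sq (m : ℝ) (v t : ℝ≥0) (x : ℝ) :
    gaussianPDFReal m v x * Real.exp (-(t * x ^ 2)) =
      (√(1 + 2 * t * v))⁻¹ * Real.exp (-(t * m ^ 2 / (1 + 2 * t * v))) *
        gaussianPDFReal (m / (1 + 2 * t * v)) (v / (1 + 2 * t * v)) x := by
  rcases eq_or_ne v 0 with rfl | hv
  · simp only [gaussianPDFReal_zero_var, Pi.zero_apply, zero_mul, zero_div, mul_zero]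
  have hD : (0 : ℝ) < 1 + 2 * t * v := by positivity
  have hsqrt : √(2 * Real.pi * v) =
      √(1 + 2 * t * v) * √(2 * Real.pi * (v / (1 + 2 * t * v))) := by
    rw [← Real.sqrt_mul hD.le]
    congr 1
    field_simp
  have hexp : Real.exp (-(x - m) ^ 2 / (2 * v)) * Real.exp (-(t * x ^ 2)) =
      Real.exp (-(t * m ^ 2 / (1 + 2 * t * v))) *
        Real.exp (-(x - m / (1 + 2 * t * v)) ^ 2 / (2 * (v / (1 + 2 * t * v)))) := by
    rw [← Real.exp_add, ← Real.exp_add]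
    congr 1
    field_simp
    ring
  simp only [gaussianPDFReal_def]
  push_cast
  rw [hsqrt, mul_inv, mul_assoc, hexp]
  ring

lemma integral_mul_exp_neg_mul_sq_gaussianReal (m : ℝ) (v t : ℝ≥0) (f : ℝ → ℝ) :
    ∫ x, f x * Real.exp (-(t * x ^ 2)) ∂gaussianReal m v =
      (√(1 + 2 * t * v))⁻¹ * Real.exp (-(t * m ^ 2 / (1 + 2 * t * v))) *
        ∫ x, f x ∂gaussianReal (m / (1 + 2 * t * v)) (v / (1 + 2 * t * v)) := by
  rcases eq_or_ne v 0 with rfl | hv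
  · simp [gaussianReal_zero_var, mul_comm]
  have hv' : v / (1 + 2 * t * v) ≠ 0 := by positivity
  rw [integral_gaussianReal_eq_integral_smul hv, integral_gaussianReal_eq_integral_smul hv',
    ← integral_const_mul]
  refine integral_congr_ae (ae_of_all _ fun x ↦ ?_)
  simp only [smul_eq_mul]
  linear_combination f x * gaussianPDFReal_mul_exp_neg_mul_sq m v t x

lemma integral_sq_gaussianReal (m : ℝ) (v : ℝ≥0) :
    ∫ x, x ^ 2 ∂gaussianReal m v = v + m ^ 2 := by
  have h := variance_eq_sub (memLp_id_gaussianReal (μ := m) (v := v) 2)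
  simp only [variance_id_gaussianReal, integral_id_gaussianReal, Pi.pow_apply, id_eq] at h
  linarith

lemma integral_comp_eval_mul_exp_neg_mul_sum_sq_pi_gaussianReal (ν : ι → ℝ) (v t : ℝ≥0) (i : ι)
    (f : ℝ → ℝ) :
    ∫ x, f (x i) * Real.exp (-(t * ∑ j, x j ^ 2)) ∂Measure.pi (fun j ↦ gaussianReal (ν j) v) =
      (√(1 + 2 * t * v))⁻¹ ^ Fintype.card ι *
        Real.exp (-(t * ∑ j, ν j ^ 2) / (1 + 2 * t * v)) *
        ∫ y, f y ∂gaussianReal (ν i / (1 + 2 * t * v)) (v / (1 + 2 * t * v)) := by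
  classical
  let g (j : ι) (y : ℝ) : ℝ := if j = i then f y else 1
  have hfactor (x : ι → ℝ) : f (x i) * Real.exp (-(t * ∑ j, x j ^ 2)) =
      ∏ j, g j (x j) * Real.exp (-(t * x j ^ 2)) := by
    rw [Finset.prod_mul_distrib, ← Real.exp_sum, Finset.sum_neg_distrib, ← Finset.mul_sum]
    simp [g]
  have hg (j : ι) : ∫ y, g j y ∂gaussianReal (ν j / (1 + 2 * t * v)) (v / (1 + 2 * t * v)) =
      if j = i then ∫ y, f y ∂gaussianReal (ν i / (1 + 2 * t * v)) (v / (1 + 2 * t * v))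
      else 1 := by
    split_ifs with hji
    · simp [g, hji]
    · simp [g, hji]
  simp_rw [hfactor]
  rw [integral_fintype_prod_eq_prod (𝕜 := ℝ) fun j y ↦ g j y * Real.exp (-(t * y ^ 2))]
  simp_rw [integral_mul_exp_neg_mul_sq_gaussianReal, hg]
  rw [Finset.prod_mul_distrib, Finset.prod_mul_distrib, ← Real.exp_sum, Finset.sum_neg_distrib,
    ← Finset.sum_div, ← Finset.mul_sum, neg_div]
  simp

lemma integral_sq_mul_exp_neg_mul_sum_sq_pi_gaussianReal {ν : ι → ℝ} (v t : ℝ≥0) {i : ι}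
    (hi : ν i = 0) :
    ∫ x, x i ^ 2 * Real.exp (-(t * ∑ j, x j ^ 2)) ∂Measure.pi (fun j ↦ gaussianReal (ν j) v) =
      v * (1 + 2 * t * v : ℝ) ^ (-(1 + Fintype.card ι / 2 : ℝ)) *
        Real.exp (-(t * ∑ j, ν j ^ 2) / (1 + 2 * t * v)) := by
  have hD : (0 : ℝ) < 1 + 2 * t * v := by positivity
  have hpow : (1 + 2 * t * v : ℝ) ^ (-(1 + Fintype.card ι / 2 : ℝ)) =
      (√(1 + 2 * t * v))⁻¹ ^ Fintype.card ι * (1 + 2 * t * v : ℝ)⁻¹ := by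
    rw [neg_add_rev, Real.rpow_add hD, Real.rpow_neg_one, inv_pow, Real.rpow_neg hD.le,
      Real.sqrt_eq_rpow, ← Real.rpow_mul_natCast hD.le, one_div_mul_eq_div]
  rw [integral_comp_eval_mul_exp_neg_mul_sum_sq_pi_gaussianReal ν v t i (· ^ 2),
    integral_sq_gaussianReal, hi, hpow]
  push_cast
  ring

end GaussianTilt

section Laplace

variable {c r : ℝ}

lemma integrableOn_const_mul_exp_neg_mul_Ioi (hr : 0 ≤ r) (hc : r = 0 → c = 0) :
    IntegrableOn (fun t ↦ c * Real.exp (-(t * r))) (Ioi 0) := by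
  rcases hr.eq_or_lt' with hr0 | hr0
  · simp [hc hr0]
  · simp_rw [mul_comm _ r, ← neg_mul]
    exact (integrableOn_exp_mul_Ioi (neg_neg_of_pos hr0) 0).const_mul c

lemma integral_const_mul_exp_neg_mul_Ioi (hr : 0 ≤ r) (hc : r = 0 → c = 0) :
    ∫ t in Ioi 0, c * Real.exp (-(t * r)) = c / r := by
  rcases hr.eq_or_lt' with hr0 | hr0
  · simp [hc hr0]
  · simp_rw [mul_comm _ r, ← neg_mul]
    rw [integral_const_mul, integral_exp_mul_Ioi (neg_neg_of_pos hr0), mul_zero, Real.exp_zero,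
      neg_div_neg_eq, mul_one_div]

lemma integral_div_eq_integral_Ioi_integral_mul_exp {α : Type*} [MeasurableSpace α]
    {μ : Measure α} [SFinite μ] {f g : α → ℝ} (hf : Measurable f) (hg : Measurable g)
    (hg0 : ∀ x, 0 ≤ g x) (hfg : ∀ x, g x = 0 → f x = 0) (hint : Integrable (fun x ↦ f x / g x) μ) :
    ∫ x, f x / g x ∂μ = ∫ t in Ioi 0, ∫ x, f x * Real.exp (-(t * g x)) ∂μ := by
  have hmeas : AEStronglyMeasurable
      (fun p : α × ℝ ↦ f p.1 * Real.exp (-(p.2 * g p.1))) (μ.prod (volume.restrict (Ioi 0))) := by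
    fun_prop
  have hnorm (x : α) : ∫ t in Ioi 0, ‖f x * Real.exp (-(t * g x))‖ = ‖f x / g x‖ := by
    simp_rw [norm_mul, Real.norm_of_nonneg (Real.exp_nonneg _)]
    rw [integral_const_mul_exp_neg_mul_Ioi (hg0 x) fun h ↦ by rw [hfg x h, norm_zero], norm_div,
      Real.norm_of_nonneg (hg0 x)]
  have hprod : Integrable (fun p : α × ℝ ↦ f p.1 * Real.exp (-(p.2 * g p.1)))
      (μ.prod (volume.restrict (Ioi 0))) := by
    refine (integrable_prod_iff hmeas).mpr ⟨ae_of_all _ fun x ↦ ?_, ?_⟩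
    · exact integrableOn_const_mul_exp_neg_mul_Ioi (hg0 x) (hfg x)
    · simpa only [hnorm] using hint.norm
  rw [← integral_integral_swap hprod]
  simp_rw [fun x ↦ integral_const_mul_exp_neg_mul_Ioi (hg0 x) (hfg x)]

end Laplace

section SquaredDirection

variable {ι : Type*} [Fintype ι]

lemma sq_le_sum_sq (x : ι → ℝ) (i : ι) : x i ^ 2 ≤ ∑ j, x j ^ 2 :=
  Finset.single_le_sum (f := fun j ↦ x j ^ 2) (fun _ _ ↦ sq_nonneg _) (Finset.mem_univ i)

lemma measurable_sq_div_sum_sq (i : ι) :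
    Measurable fun x : ι → ℝ ↦ x i ^ 2 / ∑ j, x j ^ 2 := by
  fun_prop

lemma integrable_sq_div_sum_sq (μ : Measure (ι → ℝ)) [IsFiniteMeasure μ] (i : ι) :
    Integrable (fun x ↦ x i ^ 2 / ∑ j, x j ^ 2) μ := by
  refine .of_bound (measurable_sq_div_sum_sq i).aestronglyMeasurable 1 (ae_of_all _ fun x ↦ ?_)
  rw [Real.norm_of_nonneg (by positivity)]
  exact div_le_one_of_le₀ (sq_le_sum_sq x i) (by positivity)

lemma sum_integral_sq_div_sum_sq (μ : Measure (ι → ℝ)) [IsProbabilityMeasure μ]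
    (hμ : ∀ᵐ x ∂μ, x ≠ 0) : ∑ i, ∫ x, x i ^ 2 / ∑ j, x j ^ 2 ∂μ = 1 := by
  have hsum : ∀ᵐ x ∂μ, ∑ i, x i ^ 2 / ∑ j, x j ^ 2 = 1 := by
    filter_upwards [hμ] with x hx
    obtain ⟨i, hi⟩ := Function.ne_iff.mp hx
    have hpos : 0 < ∑ j, x j ^ 2 := (sq_pos_of_ne_zero hi).trans_le (sq_le_sum_sq x i)
    rw [← Finset.sum_div, div_self hpos.ne']
  rw [← integral_finsetSum _ fun i _ ↦ integrable_sq_div_sum_sq μ i, integral_congr_ae hsum]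
  simp

lemma integral_sq_div_sum_sq_pi_gaussianReal_of_mean_eq_zero {ν : ι → ℝ} {v : ℝ≥0} (hv : v ≠ 0)
    {i : ι} (hi : ν i = 0) :
    ∫ x, x i ^ 2 / ∑ j, x j ^ 2 ∂Measure.pi (fun j ↦ gaussianReal (ν j) v) =
      (Fintype.card ι : ℝ)⁻¹ *
        kummerM 1 (Fintype.card ι / 2 + 1) (-(∑ j, ν j ^ 2) / (2 * v)) := by
  set b : ℝ := Fintype.card ι / 2 with hb
  set z : ℝ := -(∑ j, ν j ^ 2) / (2 * v) with hz
  have hb0 : 0 < b := div_pos (Nat.cast_pos.mpr (Fintype.card_pos_iff.mpr ⟨i⟩)) two_pos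
  have hv0 : (0 : ℝ) < 2 * v := by positivity
  -- The exponent `1 - 1` is `a - 1` at `a = 1` in `integral_Ioi_rpow_mul_exp_eq_kummerM`.
  let F (s : ℝ) : ℝ := s ^ (1 - 1 : ℝ) * (1 + s) ^ (-(1 + b)) * Real.exp (z * (s / (1 + s)))
  have hlaplace : ∀ t ∈ Ioi (0 : ℝ), ∫ x, x i ^ 2 * Real.exp (-(t * ∑ j, x j ^ 2))
      ∂Measure.pi (fun j ↦ gaussianReal (ν j) v) = v * F (2 * v * t) := by
    intro t (ht : 0 < t)
    lift t to ℝ≥0 using ht.le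
    have hs : (1 : ℝ) + 2 * v * t = 1 + 2 * t * v := by ring
    have hexp : z * (2 * v * t / (1 + 2 * t * v)) = -(t * ∑ j, ν j ^ 2) / (1 + 2 * t * v) := by
      rw [hz]
      field_simp
    rw [integral_sq_mul_exp_neg_mul_sum_sq_pi_gaussianReal v t hi, mul_assoc]
    simp only [F, hs, hexp, sub_self, Real.rpow_zero, one_mul, hb]
  calc ∫ x, x i ^ 2 / ∑ j, x j ^ 2 ∂Measure.pi (fun j ↦ gaussianReal (ν j) v)
      = ∫ t in Ioi (0 : ℝ), v * F (2 * v * t) := by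
        rw [integral_div_eq_integral_Ioi_integral_mul_exp (by fun_prop) (by fun_prop)
          (fun x ↦ by positivity)
          (fun x hx ↦ le_antisymm (hx ▸ sq_le_sum_sq x i) (sq_nonneg _))
          (integrable_sq_div_sum_sq _ i), setIntegral_congr_fun measurableSet_Ioi hlaplace]
    _ = v * ((2 * v : ℝ)⁻¹ * (beta 1 b * kummerM 1 (1 + b) z)) := by
        rw [integral_const_mul, integral_comp_mul_left_Ioi F 0 hv0, mul_zero, smul_eq_mul,
          integral_Ioi_rpow_mul_exp_eq_kummerM one_pos hb0]
    _ = (Fintype.card ι : ℝ)⁻¹ * kummerM 1 (b + 1) z := by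
        rw [beta_one_left hb0, add_comm, hb]
        field_simp

lemma integral_sq_div_sum_sq_pi_gaussianReal {ν : ι → ℝ} {v : ℝ≥0} (hv : v ≠ 0) {i : ι}
    (hν : ∀ j ≠ i, ν j = 0) :
    ∫ x, x i ^ 2 / ∑ j, x j ^ 2 ∂Measure.pi (fun j ↦ gaussianReal (ν j) v) =
      1 - ((Fintype.card ι : ℝ) - 1) / Fintype.card ι *
        kummerM 1 (Fintype.card ι / 2 + 1) (-(∑ j, ν j ^ 2) / (2 * v)) := by
  classical
  have : Nonempty ι := ⟨i⟩
  have (j : ι) := nullSingletonClass_gaussianReal (μ := ν j) hv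
  have hsum := sum_integral_sq_div_sum_sq (Measure.pi fun j ↦ gaussianReal (ν j) v)
    (Measure.ae_ne _ 0)
  rw [← Finset.add_sum_erase _ _ (Finset.mem_univ i), Finset.sum_congr rfl fun j hj ↦
    integral_sq_div_sum_sq_pi_gaussianReal_of_mean_eq_zero hv (hν j (Finset.ne_of_mem_erase hj)),
    Finset.sum_const, Finset.card_erase_of_mem (Finset.mem_univ i), Finset.card_univ, nsmul_eq_mul,
    Nat.cast_pred Fintype.card_pos, ← mul_assoc, ← div_eq_mul_inv] at hsum
  exact eq_sub_of_add_eq hsum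

end SquaredDirection

section GaussianVector

variable {n : ℕ}

instance isProbabilityMeasure_stdGaussianPi : IsProbabilityMeasure (stdGaussianPi n) :=
  inferInstanceAs (IsProbabilityMeasure (Measure.pi _))

lemma euclNorm_sq (x : Fin n → ℝ) : euclNorm x ^ 2 = ∑ i, x i ^ 2 :=
  Real.sq_sqrt (Finset.sum_nonneg fun _ _ ↦ sq_nonneg _)

lemma map_mulVec_stdGaussianPi {Q : Matrix (Fin n) (Fin n) ℝ}
    (hQ : Q ∈ orthogonalGroup (Fin n) ℝ) :
    (stdGaussianPi n).map Q.mulVec = stdGaussianPi n := by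
  let U : unitary (EuclideanSpace ℝ (Fin n) →L[ℝ] EuclideanSpace ℝ (Fin n)) :=
    ⟨toEuclideanCLM (n := Fin n) (𝕜 := ℝ) Q, Unitary.map_mem toEuclideanCLM hQ⟩
  have hQm : Measurable Q.mulVec := by fun_prop
  apply (MeasurableEquiv.toLp 2 (Fin n → ℝ)).map_measurableEquiv_injective
  have hcomm : WithLp.toLp 2 ∘ Q.mulVec = Unitary.linearIsometryEquiv U ∘ WithLp.toLp 2 := rfl
  rw [MeasurableEquiv.coe_toLp, Measure.map_map (by fun_prop) hQm, hcomm,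
    ← Measure.map_map (by fun_prop) (by fun_prop), stdGaussianPi, map_pi_eq_stdGaussian,
    stdGaussian_map]

lemma map_add_smul_stdGaussianPi (m : Fin n → ℝ) (c : ℝ) :
    (stdGaussianPi n).map (fun x ↦ m + c • x) =
      Measure.pi fun j ↦ gaussianReal (m j) ⟨c ^ 2, sq_nonneg c⟩ := by
  have hcoord (j : Fin n) : (gaussianReal 0 1).map (fun y ↦ m j + c * y) =
      gaussianReal (m j) ⟨c ^ 2, sq_nonneg c⟩ := by
    rw [← Function.comp_def (m j + ·), ← Measure.map_map (by fun_prop) (by fun_prop),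
      gaussianReal_map_const_mul, gaussianReal_map_const_add, mul_zero, zero_add, mul_one]
    rfl
  have (j : Fin n) : IsProbabilityMeasure ((gaussianReal 0 1).map fun y ↦ m j + c * y) :=
    Measure.isProbabilityMeasure_map (by fun_prop)
  simp_rw [← hcoord]
  exact Measure.pi_map_pi (μ := fun _ ↦ gaussianReal 0 1) (f := fun j y ↦ m j + c * y)
    fun j ↦ by fun_prop

variable {Ω : Type*} [MeasurableSpace Ω] {P : Measure Ω} {Z : Ω → Fin n → ℝ} {m : Fin n → ℝ}

lemma IsGaussianVec.map_eq_pi_gaussianReal {c : ℝ} (hc : c ≠ 0)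
    (hZ : IsGaussianVec P Z m (c ^ 2 • 1)) :
    P.map Z = Measure.pi fun j ↦ gaussianReal (m j) ⟨c ^ 2, sq_nonneg c⟩ := by
  obtain ⟨A, hA, hmap⟩ := hZ
  have hQ : c⁻¹ • A ∈ orthogonalGroup (Fin n) ℝ := by
    rw [mem_orthogonalGroup_iff, transpose_smul, smul_mul_smul_comm, hA, smul_smul]
    field_simp
    simp
  have hfactor : (fun x ↦ m + A.mulVec x) = (fun x ↦ m + c • x) ∘ (c⁻¹ • A).mulVec := by
    ext x : 1
    rw [Function.comp_apply, smul_mulVec, smul_inv_smul₀ hc]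
  rw [hmap, hfactor, ← Measure.map_map (by fun_prop) (by fun_prop), map_mulVec_stdGaussianPi hQ,
    map_add_smul_stdGaussianPi]

lemma IsGaussianVec.aemeasurable {S : Matrix (Fin n) (Fin n) ℝ} (hZ : IsGaussianVec P Z m S) :
    AEMeasurable Z P := by
  obtain ⟨A, -, hmap⟩ := hZ
  have := Measure.isProbabilityMeasure_map (μ := stdGaussianPi n)
    (f := fun x ↦ m + A.mulVec x) (by fun_prop)
  exact aemeasurable_of_map_neZero (hmap ▸ inferInstance)

end GaussianVector

end

/-- `E[ξ₁²/‖ξ‖²] = 1 − ((n−1)/n)·M(1, n/2+1, −‖ν‖²/(2λ²))`. -/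
theorem stmt13 {Ω : Type*} [MeasurableSpace Ω] (P : Measure Ω) [IsProbabilityMeasure P]
    {n : ℕ} (hn : 2 ≤ n) (lam : ℝ) (hlam : 0 < lam) (ν : Fin n → ℝ)
    (hν : ν = fun i => if i = ⟨0, by omega⟩ then euclNorm ν else 0)
    (ξ : Ω → Fin n → ℝ)
    (hgauss : IsGaussianVec P ξ ν (lam ^ 2 • (1 : Matrix (Fin n) (Fin n) ℝ))) :
    (∫ ω, (ξ ω ⟨0, by omega⟩) ^ 2 / (euclNorm (ξ ω)) ^ 2 ∂P) =
      1 - (((n : ℝ) - 1) / n) *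
        kummerM 1 ((n : ℝ) / 2 + 1) (-(euclNorm ν) ^ 2 / (2 * lam ^ 2)) := by
  have hw : (⟨lam ^ 2, sq_nonneg lam⟩ : NNReal) ≠ 0 := by
    simpa [← NNReal.coe_ne_zero] using hlam.ne'
  have hν0 : ∀ j ≠ (⟨0, by omega⟩ : Fin n), ν j = 0 := fun j hj ↦ by
    rw [hν]
    exact if_neg hj
  have key := integral_sq_div_sum_sq_pi_gaussianReal hw hν0
  rw [← hgauss.map_eq_pi_gaussianReal hlam.ne', integral_map hgauss.aemeasurable
    (measurable_sq_div_sum_sq _).aestronglyMeasurable, Fintype.card_fin] at key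
  simp_rw [euclNorm_sq]
  exact key
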